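/- arXiv:1501.06211 — 3 statements merged into one kernel-verified Lean document; each statement's English description precedes it below -/
import Mathlib

section
/- Let K be an (n_I + n_Γ) × (n_I + n_Γ) real matrix written in block form K = [[K_II, K_IΓ], [K_ΓI, K_ΓΓ]] with K_II invertible, let S = K_ΓΓ − K_ΓI K_II⁻¹ K_IΓ be invertible, and let P = [[K_II, K_IΓ], [0, S]]. Then (K P⁻¹ − I)² = 0, i.e. the right-preconditioned matrix K P⁻¹ is unipotent of index at most 2. -/
open Matrix

/-- With the Schur-complement block upper-triangular preconditioner `P`,
the right-preconditioned matrix `K * P⁻¹` satisfies `(K P⁻¹ − I)² = 0`,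
i.e. it is unipotent of index at most 2. -/
theorem schur_preconditioned_unipotent
    (nI nΓ : ℕ)
    (KII : Matrix (Fin nI) (Fin nI) ℝ) (KIΓ : Matrix (Fin nI) (Fin nΓ) ℝ)
    (KΓI : Matrix (Fin nΓ) (Fin nI) ℝ) (KΓΓ : Matrix (Fin nΓ) (Fin nΓ) ℝ)
    (hKII : IsUnit KII)
    (S : Matrix (Fin nΓ) (Fin nΓ) ℝ)
    (hS : S = KΓΓ - KΓI * KII⁻¹ * KIΓ)
    (hSu : IsUnit S)
    (K : Matrix (Fin nI ⊕ Fin nΓ) (Fin nI ⊕ Fin nΓ) ℝ)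
    (hK : K = fromBlocks KII KIΓ KΓI KΓΓ)
    (P : Matrix (Fin nI ⊕ Fin nΓ) (Fin nI ⊕ Fin nΓ) ℝ)
    (hP : P = fromBlocks KII KIΓ 0 S) :
    (K * P⁻¹ - 1) ^ 2 = 0 := by
  have hPu : IsUnit P := by
    rw [hP]
    exact isUnit_fromBlocks_zero₂₁.2 ⟨hKII, hSu⟩
  have hPd : IsUnit P.det := (Matrix.isUnit_iff_isUnit_det P).1 hPu
  have hKd : IsUnit KII.det := (Matrix.isUnit_iff_isUnit_det KII).1 hKII
  have hfac : K = fromBlocks 1 0 (KΓI * KII⁻¹) 1 * P := by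
    rw [hK, hP, hS, fromBlocks_multiply]
    simp [Matrix.mul_assoc, Matrix.nonsing_inv_mul KII hKd]
  have h1 : K * P⁻¹ - 1 = fromBlocks 0 0 (KΓI * KII⁻¹) 0 := by
    rw [hfac, Matrix.mul_assoc, Matrix.mul_nonsing_inv P hPd, Matrix.mul_one,
      sub_eq_iff_eq_add, ← fromBlocks_one, fromBlocks_add]
    simp
  rw [h1, pow_two, fromBlocks_multiply]
  simp
end

section
/- Let K be an (n_I + n_Γ) × (n_I + n_Γ) real matrix written in block form K = [[K_II, K_IΓ], [K_ΓI, K_ΓΓ]] with K_II invertible, let S = K_ΓΓ − K_ΓI K_II⁻¹ K_IΓ be invertible, and let P = [[K_II, K_IΓ], [0, S]]. Then the characteristic polynomial of K P⁻¹ is (X − 1)^(n_I + n_Γ); in particular every eigenvalue of the preconditioned matrix K P⁻¹ equals 1. -/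
open Matrix Polynomial

/-- With the Schur-complement block upper-triangular preconditioner `P`,
the characteristic polynomial of `K * P⁻¹` is `(X − 1)^(n_I + n_Γ)`;
in particular every eigenvalue of the preconditioned matrix equals 1. -/
theorem schur_preconditioned_charpoly
    (nI nΓ : ℕ)
    (KII : Matrix (Fin nI) (Fin nI) ℝ) (KIΓ : Matrix (Fin nI) (Fin nΓ) ℝ)
    (KΓI : Matrix (Fin nΓ) (Fin nI) ℝ) (KΓΓ : Matrix (Fin nΓ) (Fin nΓ) ℝ)
    (hKII : IsUnit KII)
    (S : Matrix (Fin nΓ) (Fin nΓ) ℝ)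
    (hS : S = KΓΓ - KΓI * KII⁻¹ * KIΓ)
    (hSu : IsUnit S)
    (K : Matrix (Fin nI ⊕ Fin nΓ) (Fin nI ⊕ Fin nΓ) ℝ)
    (hK : K = fromBlocks KII KIΓ KΓI KΓΓ)
    (P : Matrix (Fin nI ⊕ Fin nΓ) (Fin nI ⊕ Fin nΓ) ℝ)
    (hP : P = fromBlocks KII KIΓ 0 S) :
    (K * P⁻¹).charpoly = (X - 1) ^ (nI + nΓ) ∧
      ∀ μ : ℝ, Module.End.HasEigenvalue (Matrix.mulVecLin (K * P⁻¹)) μ → μ = 1 := by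
  have hPu : IsUnit P := by
    rw [hP, isUnit_fromBlocks_zero₂₁]; exact ⟨hKII, hSu⟩
  have hdet := (Matrix.isUnit_iff_isUnit_det _).1 hKII
  have hPdet := (Matrix.isUnit_iff_isUnit_det _).1 hPu
  have hKP : K = fromBlocks 1 0 (KΓI * KII⁻¹) 1 * P := by
    rw [hK, hP, fromBlocks_multiply, hS]
    simp [Matrix.mul_assoc, Matrix.nonsing_inv_mul _ hdet]
  have hL : K * P⁻¹ = fromBlocks 1 0 (KΓI * KII⁻¹) 1 := by
    rw [hKP, Matrix.mul_assoc, Matrix.mul_nonsing_inv _ hPdet, Matrix.mul_one]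
  have hc : (K * P⁻¹).charpoly = (X - 1) ^ (nI + nΓ) := by
    rw [hL, charpoly_fromBlocks_zero₁₂, charpoly_one, charpoly_one, pow_add]
    simp
  refine ⟨hc, fun μ hμ => ?_⟩
  have hr := (Module.End.hasEigenvalue_iff_isRoot_charpoly _ _).1 hμ
  rw [← Matrix.toLin'_apply', Matrix.charpoly_toLin', hc] at hr
  have h0 : (μ - 1) ^ (nI + nΓ) = 0 := by simpa [IsRoot] using hr
  exact sub_eq_zero.1 (eq_zero_of_pow_eq_zero h0)
end

section
/- Let K be an (n_I + n_Γ) × (n_I + n_Γ) real matrix written in block form K = [[K_II, K_IΓ], [K_ΓI, K_ΓΓ]] with K_II invertible, let S = K_ΓΓ − K_ΓI K_II⁻¹ K_IΓ be invertible, and let P = [[K_II, K_IΓ], [0, S]]. Then the minimal polynomial of K P⁻¹ divides (X − 1)²; moreover, if K_ΓI K_II⁻¹ ≠ 0, the minimal polynomial of K P⁻¹ equals (X − 1)². -/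
open Matrix Polynomial

/-- With the Schur-complement block upper-triangular preconditioner `P`,
the minimal polynomial of `K * P⁻¹` divides `(X − 1)²`; moreover, if
`K_ΓI K_II⁻¹ ≠ 0` then the minimal polynomial equals `(X − 1)²`. -/
theorem schur_preconditioned_minpoly
    (nI nΓ : ℕ)
    (KII : Matrix (Fin nI) (Fin nI) ℝ) (KIΓ : Matrix (Fin nI) (Fin nΓ) ℝ)
    (KΓI : Matrix (Fin nΓ) (Fin nI) ℝ) (KΓΓ : Matrix (Fin nΓ) (Fin nΓ) ℝ)
    (hKII : IsUnit KII)
    (S : Matrix (Fin nΓ) (Fin nΓ) ℝ)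
    (hS : S = KΓΓ - KΓI * KII⁻¹ * KIΓ)
    (hSu : IsUnit S)
    (K : Matrix (Fin nI ⊕ Fin nΓ) (Fin nI ⊕ Fin nΓ) ℝ)
    (hK : K = fromBlocks KII KIΓ KΓI KΓΓ)
    (P : Matrix (Fin nI ⊕ Fin nΓ) (Fin nI ⊕ Fin nΓ) ℝ)
    (hP : P = fromBlocks KII KIΓ 0 S) :
    minpoly ℝ (K * P⁻¹) ∣ (X - 1) ^ 2 ∧
      (KΓI * KII⁻¹ ≠ 0 → minpoly ℝ (K * P⁻¹) = (X - 1) ^ 2) := by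
  have hd1 : IsUnit KII.det := (Matrix.isUnit_iff_isUnit_det _).1 hKII
  have hd2 : IsUnit S.det := (Matrix.isUnit_iff_isUnit_det _).1 hSu
  have hPd : IsUnit P.det := by
    rw [hP, Matrix.det_fromBlocks_zero₂₁]
    exact hd1.mul hd2
  have hL : K * P⁻¹ = fromBlocks 1 0 (KΓI * KII⁻¹) 1 := by
    have h : K = fromBlocks 1 0 (KΓI * KII⁻¹) 1 * P := by
      rw [hK, hP, fromBlocks_multiply, Matrix.nonsing_inv_mul_cancel_right _ _ hd1, hS]
      simp
    conv_lhs => rw [h]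
    exact Matrix.mul_nonsing_inv_cancel_right _ _ hPd
  rw [hL]
  generalize KΓI * KII⁻¹ = B
  have hsub : aeval (fromBlocks 1 0 B 1 : Matrix (Fin nI ⊕ Fin nΓ) (Fin nI ⊕ Fin nΓ) ℝ)
      (X - 1 : ℝ[X]) = fromBlocks 0 0 B 0 := by
    rw [map_sub, aeval_X, map_one, ← fromBlocks_one, sub_eq_iff_eq_add, fromBlocks_add]
    simp
  have hdvd : minpoly ℝ (fromBlocks 1 0 B 1 : Matrix (Fin nI ⊕ Fin nΓ) (Fin nI ⊕ Fin nΓ) ℝ)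
      ∣ (X - 1) ^ 2 := by
    apply minpoly.dvd
    rw [map_pow, hsub, pow_two, fromBlocks_multiply]
    simp
  refine ⟨hdvd, fun hB => ?_⟩
  have hm : (X - 1 : ℝ[X]).Monic := by simpa using monic_X_sub_C (1 : ℝ)
  have hp : Prime (X - 1 : ℝ[X]) := by simpa using prime_X_sub_C (1 : ℝ)
  obtain ⟨i, hi, ha⟩ := (dvd_prime_pow hp 2).1 hdvd
  have he := eq_of_monic_of_associated (minpoly.monic (Matrix.isIntegral _)) (hm.pow i) ha
  have hi2 : i = 2 := by
    by_contra hne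
    have h1 : (X - 1 : ℝ[X]) ^ i ∣ X - 1 := by
      simpa using pow_dvd_pow (X - 1 : ℝ[X]) (show i ≤ 1 by omega)
    rw [← he, minpoly.dvd_iff, hsub, ← fromBlocks_zero, fromBlocks_inj] at h1
    exact hB h1.2.2.1
  rw [he, hi2]
end
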